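/- For every a ∈ [0,1) and every φ ∈ [0,1), the pushforward of μ under u ↦ F_φ(a, u) does not depend on φ; explicitly, it equals the uniform probability measure on [0, a) if 0 < a < 1/2 (and the Dirac measure at 0 if a = 0), and it equals the uniform probability measure on [0,1) if a ≥ 1/2. Hence every interventional distribution P(X₂ | do(X₁ = a)) of the SCM is identical across all parametrizations φ. -/

import Mathlib

/-!
If `a < 1 / 2`, then `F φ a` is multiplication by `a`, which does not involve `φ`. If `a ≥ 1 / 2`,
it is the rotation of `[0, 1)` by `φ`: the translation by `φ` carries `[0, 1)` to `[φ, φ + 1)`,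
and reduction modulo `1` carries the latter back to `[0, 1)`. The second map preserves Lebesgue
measure because both intervals are fundamental domains for the action of `ℤ` on `ℝ`, so that they
assign the same measure to every `1`-periodic set.
-/

open MeasureTheory

/-- The shift of `[0,1)` by `φ`, wrapped around modulo 1. -/
noncomputable def zeta (φ u : ℝ) : ℝ := if 1 ≤ u + φ then u + φ - 1 else u + φ

/-- The structural function of the SCM: `X₂ = u₂·x₁` if `x₁ < 1/2`
and `X₂ = ζ_φ(u₂)` if `x₁ ≥ 1/2`. -/
noncomputable def F (φ x₁ u₂ : ℝ) : ℝ := if x₁ < 1 / 2 then u₂ * x₁ else zeta φ u₂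

/-- The uniform probability measure on `[0,1)`. -/
noncomputable def unif : Measure ℝ := volume.restrict (Set.Ico (0 : ℝ) 1)

lemma measure_inter_Ico_eq_of_periodic {p : ℝ} (hp : 0 < p) {s : Set ℝ} (hs : MeasurableSet s)
    (hsp : Function.Periodic (· ∈ s) p) (a b : ℝ) :
    volume (s ∩ Set.Ico a (a + p)) = volume (s ∩ Set.Ico b (b + p)) := by
  have hinv : ∀ g : AddSubgroup.zmultiples p, (g +ᵥ ·) ⁻¹' s = s := by
    rintro ⟨_, n, rfl⟩
    ext x
    simpa [AddSubgroup.vadd_def, add_comm] using hsp.zsmul n x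
  have hIoc : ∀ c, volume (s ∩ Set.Ico c (c + p)) = volume (s ∩ Set.Ioc c (c + p)) := fun _ =>
    measure_congr (ae_eq_set_inter (ae_eq_refl s) Ico_ae_eq_Ioc)
  rw [hIoc, hIoc]
  exact (isAddFundamentalDomain_Ioc hp a).measure_set_eq (isAddFundamentalDomain_Ioc hp b) hs hinv

section ToIcoMod

variable {p : ℝ} (hp : 0 < p)

lemma measurable_toIcoMod (a : ℝ) : Measurable (toIcoMod hp a) := by
  simp only [funext (toIcoMod_eq_add_fract_mul hp a)]
  fun_prop

lemma measurePreserving_toIcoMod (a b : ℝ) :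
    MeasurePreserving (toIcoMod hp a) (volume.restrict (Set.Ico b (b + p)))
      (volume.restrict (Set.Ico a (a + p))) := by
  refine ⟨measurable_toIcoMod hp a, Measure.ext fun s hs => ?_⟩
  have hpre : MeasurableSet (toIcoMod hp a ⁻¹' s) := measurable_toIcoMod hp a hs
  have hperiodic : Function.Periodic (· ∈ toIcoMod hp a ⁻¹' s) p := fun x => by
    simp only [Set.mem_preimage, toIcoMod_add_right]
  have hself : toIcoMod hp a ⁻¹' s ∩ Set.Ico a (a + p) = s ∩ Set.Ico a (a + p) := by
    ext x
    refine and_congr_left fun hx => ?_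
    rw [Set.mem_preimage, (toIcoMod_eq_self hp).2 hx]
  rw [Measure.map_apply (measurable_toIcoMod hp a) hs, Measure.restrict_apply hpre,
    measure_inter_Ico_eq_of_periodic hp hpre hperiodic b a, hself, Measure.restrict_apply hs]

lemma measurePreserving_toIcoMod_add_const (a b c : ℝ) :
    MeasurePreserving (fun x => toIcoMod hp a (x + c)) (volume.restrict (Set.Ico b (b + p)))
      (volume.restrict (Set.Ico a (a + p))) := by
  have htranslate : MeasurePreserving (· + c) (volume.restrict (Set.Ico b (b + p)))
      (volume.restrict (Set.Ico (b + c) (b + c + p))) := by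
    convert (measurePreserving_add_right volume c).restrict_preimage
      (measurableSet_Ico (a := b + c) (b := b + c + p)) using 2
    simp [add_right_comm b c p]
  exact (measurePreserving_toIcoMod hp a (b + c)).comp htranslate

end ToIcoMod

lemma map_mul_const_restrict_Ico {a : ℝ} (ha : 0 < a) (b c : ℝ) :
    Measure.map (· * a) (volume.restrict (Set.Ico b c)) =
      (ENNReal.ofReal a)⁻¹ • volume.restrict (Set.Ico (b * a) (c * a)) := by
  have hpre : (· * a) ⁻¹' Set.Ico (b * a) (c * a) = Set.Ico b c := by
    simp [Set.preimage_mul_const_Ico₀ _ _ ha, ha.ne']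
  rw [← hpre, ← Measure.restrict_map (by fun_prop) measurableSet_Ico,
    Real.map_volume_mul_right ha.ne', Measure.restrict_smul, abs_of_pos (inv_pos.2 ha),
    ENNReal.ofReal_inv_of_pos ha]

instance isProbabilityMeasure_unif : IsProbabilityMeasure unif :=
  ⟨by simp [unif]⟩

lemma zeta_eq_toIcoMod {φ u : ℝ} (h : u + φ ∈ Set.Ico (0 : ℝ) 2) :
    zeta φ u = toIcoMod one_pos 0 (u + φ) := by
  symm
  unfold zeta
  split_ifs with hwrap
  · exact (toIcoMod_eq_iff one_pos).2 ⟨⟨by linarith, by linarith [h.2]⟩, 1, by simp⟩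
  · exact (toIcoMod_eq_self one_pos).2 ⟨h.1, by linarith⟩

lemma map_zeta_unif {φ : ℝ} (hφ : φ ∈ Set.Icc (0 : ℝ) 1) : Measure.map (zeta φ) unif = unif := by
  have hrotation : zeta φ =ᵐ[unif] fun u => toIcoMod one_pos 0 (u + φ) :=
    ae_restrict_of_forall_mem measurableSet_Ico fun u hu =>
      zeta_eq_toIcoMod ⟨by linarith [hu.1, hφ.1], by linarith [hu.2, hφ.2]⟩
  rw [Measure.map_congr hrotation]
  simpa [unif] using (measurePreserving_toIcoMod_add_const one_pos 0 0 φ).map_eq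

lemma F_of_lt {φ a : ℝ} (ha : a < 1 / 2) : F φ a = (· * a) :=
  funext fun _ => if_pos ha

lemma F_of_le {φ a : ℝ} (ha : 1 / 2 ≤ a) : F φ a = zeta φ :=
  funext fun _ => if_neg ha.not_gt

theorem interventional_dist_indep_of_param_general {a φ : ℝ}
    (ha : 0 ≤ a) (hφ : φ ∈ Set.Icc (0 : ℝ) 1) :
    Measure.map (F φ a) unif =
      if a = 0 then Measure.dirac 0
      else if a < 1 / 2 then (ENNReal.ofReal a)⁻¹ • volume.restrict (Set.Ico (0 : ℝ) a)
      else volume.restrict (Set.Ico (0 : ℝ) 1) := by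
  split_ifs with hzero hlt
  · simp [F_of_lt, hzero]
  · have hpos : 0 < a := lt_of_le_of_ne' ha hzero
    simpa [F_of_lt hlt, unif] using map_mul_const_restrict_Ico hpos 0 1
  · rw [F_of_le (not_lt.1 hlt), map_zeta_unif hφ, unif]

/-- The interventional distribution `P(X₂ | do(X₁ = a))`, i.e. the pushforward of
the uniform measure under `u ↦ F_φ(a, u)`, does not depend on `φ`: it is the Dirac
measure at `0` if `a = 0`, the uniform probability measure on `[0, a)` if
`0 < a < 1/2`, and the uniform probability measure on `[0,1)` if `a ≥ 1/2`. -/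
theorem interventional_dist_indep_of_param (a φ : ℝ)
    (ha : a ∈ Set.Ico (0 : ℝ) 1) (hφ : φ ∈ Set.Ico (0 : ℝ) 1) :
    Measure.map (fun u => F φ a u) unif =
      if a = 0 then Measure.dirac 0
      else if a < 1 / 2 then (ENNReal.ofReal a)⁻¹ • volume.restrict (Set.Ico (0 : ℝ) a)
      else volume.restrict (Set.Ico (0 : ℝ) 1) :=
  interventional_dist_indep_of_param_general ha.1 (Set.Ico_subset_Icc_self hφ)
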